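/- arXiv:1712.00469 — 2 statements merged into one kernel-verified Lean document; each statement's English description precedes it below -/
import Mathlib

section
/- Let 𝓑 be the substructure of the tree structure 𝒜 generated by {(1,⟨⟩)}. Then: (i) the underlying set of 𝓑 is {(n,τ) : n ≥ 1}, so 𝓑 is a proper substructure of 𝒜; (ii) the map (n,τ) ↦ (n+1,τ) is an isomorphism of L₀-structures from 𝒜 onto 𝓑; and (iii) 𝓑 is a Σ₁-elementary substructure of 𝒜. In particular, 𝒜 contains a proper Σ₁-elementary substructure isomorphic to itself. -/
/-!
Every node is reached from `(0,⟨⟩)`, so translating the levels by `k` is an isomorphism from `𝒜`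
onto the substructure generated by `(k,⟨⟩)`, which therefore consists of the levels `≥ k`.

For Σ₁-elementarity, fix `j ∈ ℤ` and hang everything of level `< k` below `(k,⟨⟩)`, along a path
all of whose steps are `j`-th children. This is a homomorphic retraction of `𝒜` onto the levels
`≥ k`, injective on the nodes whose sequence does not begin with `j`. A quantifier-free formula
compares only finitely many nodes, so all but finitely many `j` preserve its truth value, and such
a retraction carries witnesses in `𝒜` to witnesses in the substructure.
-/

open FirstOrder FirstOrder.Language

/-- The domain of the tree structure `𝒜`: pairs `(n,τ)` with `n ∈ ℕ` and `τ ∈ ℤ^{<ω}` a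
finite sequence of integers. -/
abbrev TreeDom : Type := ℕ × List ℤ

/-- The function symbols of the language `L₀`: a unary symbol `p` and a unary symbol `c i`
for each integer `i ∈ ℤ`. -/
inductive TreeFn : ℕ → Type
  | p : TreeFn 1
  | c : ℤ → TreeFn 1

/-- The language `L₀`, with unary function symbols `p` and `c_i` (`i ∈ ℤ`) and no relation
symbols. -/
def L0 : Language := ⟨TreeFn, fun _ => Empty⟩

/-- The parent function: `p^𝒜(n,τ) = (n,τ⁻)` if `τ` is nonempty (`τ⁻` being `τ` with its
last entry removed), and `p^𝒜(n,⟨⟩) = (n+1,⟨⟩)`. -/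
def pInterp (x : TreeDom) : TreeDom :=
  if x.2 = [] then (x.1 + 1, []) else (x.1, x.2.dropLast)

/-- The `i`-th child function: `c_i^𝒜(n,τ) = (n, τ⌢i)`, the sequence `τ` with `i`
appended. -/
def cInterp (i : ℤ) (x : TreeDom) : TreeDom := (x.1, x.2 ++ [i])

/-- The tree `L₀`-structure `𝒜` on `TreeDom`. -/
instance treeStructure : L0.Structure TreeDom where
  funMap {_n} f x :=
    match f with
    | TreeFn.p => pInterp (x 0)
    | TreeFn.c i => cInterp i (x 0)
  RelMap {_n} r _ := r.elim

/-- `𝓑`, the substructure of `𝒜` generated by `{(1,⟨⟩)}`. -/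
def TreeB : L0.Substructure TreeDom :=
  Substructure.closure L0 ({((1 : ℕ), ([] : List ℤ))} : Set TreeDom)

/-- A substructure `S` of `M` is a Σ₁-elementary substructure if for every quantifier-free
formula `φ(x̄,ȳ)` and every tuple `v` of elements of `S`, if `M ⊨ ∃x̄ φ(x̄,v)` then
`S ⊨ ∃x̄ φ(x̄,v)`. -/
def Sigma1Elementary (L : Language) (M : Type*) [L.Structure M] (S : L.Substructure M) :
    Prop :=
  ∀ (k m : ℕ) (φ : L.BoundedFormula (Fin k) m), φ.IsQF → ∀ v : Fin k → S,
    φ.exs.Realize (fun i => (v i : M)) → φ.exs.Realize v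

section EventuallyEmbedding

variable {L : Language} {M N ι : Type*} [L.Structure M] [L.Structure N]

/-- A family of homomorphisms that is eventually an embedding on every finite set, even though no
single member need be one: each inequality and each failure of a relation is eventually
preserved. -/
structure EventuallyEmbedding (l : Filter ι) (r : ι → M →[L] N) : Prop where
  eventually_injective (x y : M) : ∀ᶠ j in l, r j x = r j y → x = y
  eventually_reflects {n : ℕ} (R : L.Relations n) (xs : Fin n → M) :
    ∀ᶠ j in l, Structure.RelMap R (r j ∘ xs) → Structure.RelMap R xs

theorem EventuallyEmbedding.eventually_realize_iff {l : Filter ι} {r : ι → M →[L] N}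
    (hr : EventuallyEmbedding l r) {α : Type*} {m : ℕ} {φ : L.BoundedFormula α m} (hφ : φ.IsQF)
    (v : α → M) (xs : Fin m → M) :
    ∀ᶠ j in l, φ.Realize (r j ∘ v) (r j ∘ xs) ↔ φ.Realize v xs := by
  induction hφ with
  | falsum => exact .of_forall fun _ => Iff.rfl
  | of_isAtomic hatomic =>
    cases hatomic with
    | equal t₁ t₂ =>
      filter_upwards [hr.eventually_injective (t₁.realize (Sum.elim v xs))
        (t₂.realize (Sum.elim v xs))] with j hj
      simp only [BoundedFormula.realize_bdEqual, ← Sum.comp_elim, HomClass.realize_term]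
      exact ⟨hj, congrArg _⟩
    | rel R ts =>
      filter_upwards [hr.eventually_reflects R fun i => (ts i).realize (Sum.elim v xs)] with j hj
      simp only [BoundedFormula.realize_rel, ← Sum.comp_elim, HomClass.realize_term]
      exact ⟨hj, (r j).map_rel R _⟩
  | imp _ _ ih₁ ih₂ =>
    filter_upwards [ih₁, ih₂] with j h₁ h₂
    rw [BoundedFormula.realize_imp, BoundedFormula.realize_imp, h₁, h₂]

theorem EventuallyEmbedding.sigma1Elementary {S : L.Substructure M} {l : Filter ι} [l.NeBot]
    {r : ι → M →[L] S} (hr : EventuallyEmbedding l r) (hfix : ∀ x : S, ∀ᶠ j in l, r j x = x) :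
    Sigma1Elementary L M S := by
  intro k m φ hφ v hv
  rw [BoundedFormula.realize_exs] at hv ⊢
  obtain ⟨xs, hxs⟩ := hv
  have hparam : ∀ᶠ j in l, ∀ i, r j (v i) = v i := Filter.eventually_all.2 fun i => hfix (v i)
  obtain ⟨j, hj, hjv⟩ := ((hr.eventually_realize_iff hφ (fun i => v i) xs).and hparam).exists
  have hrv : (r j ∘ fun i => (v i : M)) = v := funext hjv
  exact ⟨r j ∘ xs, hrv ▸ hj.2 hxs⟩

end EventuallyEmbedding

instance : L0.IsAlgebraic := fun _ => inferInstanceAs (IsEmpty Empty)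

theorem pInterp_mem (S : L0.Substructure TreeDom) {x : TreeDom} (hx : x ∈ S) : pInterp x ∈ S :=
  S.fun_mem (n := 1) TreeFn.p (fun _ => x) fun _ => hx

theorem cInterp_mem (S : L0.Substructure TreeDom) (i : ℤ) {x : TreeDom} (hx : x ∈ S) :
    cInterp i x ∈ S :=
  S.fun_mem (n := 1) (TreeFn.c i) (fun _ => x) fun _ => hx

/-- The endomorphism of `𝒜` given by a map that commutes with the parent function and with all
child functions. -/
def homOfCommute (f : TreeDom → TreeDom) (hp : Function.Commute f pInterp)
    (hc : ∀ i, Function.Commute f (cInterp i)) : TreeDom →[L0] TreeDom where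
  toFun := f
  map_fun' s x := by
    cases s with
    | p => exact hp (x 0)
    | c i => exact hc i (x 0)
  map_rel' R := isEmptyElim R

/-- The self-embedding `(n,τ) ↦ (n+k,τ)` of `𝒜`. -/
def raise (k : ℕ) : TreeDom ↪[L0] TreeDom :=
  Embedding.ofInjective (f := homOfCommute (fun x => (x.1 + k, x.2))
    (by rintro ⟨n, τ⟩; simp only [pInterp]; split_ifs <;> simp only [Nat.add_right_comm])
    (fun _ _ => rfl))
    (by
      rintro ⟨n, τ⟩ ⟨m, σ⟩ h
      obtain ⟨hlevel, hseq⟩ := Prod.mk.inj h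
      exact Prod.ext (Nat.add_right_cancel hlevel) hseq)

/-- The substructure of `𝒜` generated by `(k,⟨⟩)`; thus `𝓑` is `rootSubstructure 1`. -/
def rootSubstructure (k : ℕ) : L0.Substructure TreeDom :=
  Substructure.closure L0 {((k, []) : TreeDom)}

theorem rootSubstructure_zero : rootSubstructure 0 = ⊤ := by
  refine eq_top_iff.2 ?_
  rintro ⟨n, τ⟩ -
  induction τ using List.reverseRecOn with
  | nil =>
    induction n with
    | zero => exact Substructure.subset_closure rfl
    | succ n ih => exact pInterp_mem _ ih
  | append_singleton τ i ih => exact cInterp_mem _ i ih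

theorem rootSubstructure_eq_range_raise (k : ℕ) : rootSubstructure k = (raise k).toHom.range := by
  have himage : (raise k).toHom '' {((0, []) : TreeDom)} = {(k, [])} := by
    rw [Set.image_singleton]
    exact congrArg (fun n => {((n, []) : TreeDom)}) (Nat.zero_add k)
  rw [Hom.range_eq_map, ← rootSubstructure_zero, rootSubstructure, rootSubstructure,
    Substructure.map_closure, himage]

theorem mem_rootSubstructure {k : ℕ} {x : TreeDom} : x ∈ rootSubstructure k ↔ k ≤ x.1 := by
  rw [rootSubstructure_eq_range_raise, Hom.mem_range]
  constructor
  · rintro ⟨y, rfl⟩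
    exact Nat.le_add_left k y.1
  · exact fun hx => ⟨(x.1 - k, x.2), Prod.ext (Nat.sub_add_cancel hx) rfl⟩

/-- The retraction of `𝒜` onto the levels `≥ k` that sends `(n,⟨⟩)`, for `n < k`, to the node
reached from `(k,⟨⟩)` by `k - n` steps to the `j`-th child, and moves the nodes below `(n,⟨⟩)`
along with it. Truncated subtraction makes it the identity on the levels `≥ k`. -/
def graft (k : ℕ) (j : ℤ) : TreeDom →[L0] TreeDom :=
  homOfCommute (fun x => (max x.1 k, List.replicate (k - x.1) j ++ x.2))
    (by
      rintro ⟨n, τ⟩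
      rcases eq_or_ne τ [] with rfl | hτ
      · rcases le_or_gt k n with hkn | hnk
        · simp [pInterp, hkn, hkn.trans n.le_succ]
        · simp [pInterp, Nat.sub_ne_zero_of_lt hnk, hnk.le, Nat.succ_le_of_lt hnk, Nat.sub_add_eq]
      · simp [pInterp, hτ])
    (fun i x => by simp [cInterp])

theorem graft_apply (k : ℕ) (j : ℤ) (x : TreeDom) :
    graft k j x = (max x.1 k, List.replicate (k - x.1) j ++ x.2) :=
  rfl

theorem graft_mem_rootSubstructure (k : ℕ) (j : ℤ) (x : TreeDom) :
    graft k j x ∈ rootSubstructure k :=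
  mem_rootSubstructure.2 (le_max_right x.1 k)

theorem graft_eq_self {k : ℕ} (j : ℤ) {x : TreeDom} (hx : x ∈ rootSubstructure k) :
    graft k j x = x := by
  rw [mem_rootSubstructure] at hx
  rw [graft_apply, max_eq_left hx, Nat.sub_eq_zero_of_le hx, List.replicate_zero, List.nil_append]

theorem replicate_append_inj {α : Type*} {a b : ℕ} {j : α} {τ σ : List α}
    (hτ : τ.head? ≠ some j) (hσ : σ.head? ≠ some j)
    (h : List.replicate a j ++ τ = List.replicate b j ++ σ) : a = b ∧ τ = σ := by
  induction a generalizing b with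
  | zero =>
    cases b with
    | zero => exact ⟨rfl, h⟩
    | succ b => exact absurd (congrArg List.head? h) hτ
  | succ a ih =>
    cases b with
    | zero => exact absurd (congrArg List.head? h.symm) hσ
    | succ b =>
      obtain ⟨hab, hτσ⟩ := ih (List.cons.inj h).2
      exact ⟨congrArg Nat.succ hab, hτσ⟩

theorem injOn_graft (k : ℕ) (j : ℤ) :
    Set.InjOn (graft k j) {x | x.2.head? ≠ some j} := by
  intro x hx y hy hxy
  obtain ⟨hlevel, hseq⟩ := Prod.mk.inj hxy
  obtain ⟨hdepth, htail⟩ := replicate_append_inj hx hy hseq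
  exact Prod.ext (by omega) htail

theorem eventually_head?_ne {α : Type*} (τ : List α) :
    ∀ᶠ j in Filter.cofinite, τ.head? ≠ some j := by
  have hsub : {j | τ.head? = some j}.Subsingleton := fun i hi j hj =>
    Option.some_injective α (hi.symm.trans hj)
  exact hsub.finite.eventually_cofinite_notMem

theorem eventuallyEmbedding_graft (k : ℕ) :
    EventuallyEmbedding Filter.cofinite fun j =>
      (graft k j).codRestrict (rootSubstructure k) (graft_mem_rootSubstructure k j) where
  eventually_injective x y := by
    filter_upwards [eventually_head?_ne x.2, eventually_head?_ne y.2] with j hx hy hxy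
    exact injOn_graft k j hx hy (Subtype.ext_iff.1 hxy)
  eventually_reflects R := isEmptyElim R

theorem sigma1Elementary_rootSubstructure (k : ℕ) :
    Sigma1Elementary L0 TreeDom (rootSubstructure k) :=
  (eventuallyEmbedding_graft k).sigma1Elementary fun x =>
    .of_forall fun j => Subtype.ext (graft_eq_self j x.2)

theorem rootSubstructure_ne_top {k : ℕ} (hk : k ≠ 0) : rootSubstructure k ≠ ⊤ := by
  intro htop
  have hroot : ((0, []) : TreeDom) ∈ rootSubstructure k := htop ▸ Substructure.mem_top _
  exact hk (Nat.le_zero.1 (mem_rootSubstructure.1 hroot))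

theorem exists_equiv_rootSubstructure (k : ℕ) :
    ∃ e : TreeDom ≃[L0] rootSubstructure k, ∀ x, (e x : TreeDom) = (x.1 + k, x.2) := by
  rw [rootSubstructure_eq_range_raise]
  exact ⟨(raise k).equivRange, fun _ => rfl⟩

theorem stmt_12_general {k : ℕ} (hk : k ≠ 0) :
    (rootSubstructure k : Set TreeDom) = {x : TreeDom | k ≤ x.1} ∧
    rootSubstructure k ≠ ⊤ ∧
    (∃ e : TreeDom ≃[L0] rootSubstructure k, ∀ x : TreeDom, (e x : TreeDom) = (x.1 + k, x.2)) ∧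
    Sigma1Elementary L0 TreeDom (rootSubstructure k) :=
  ⟨Set.ext fun _ => mem_rootSubstructure, rootSubstructure_ne_top hk,
    exists_equiv_rootSubstructure k, sigma1Elementary_rootSubstructure k⟩

/-- (i) the underlying set of `𝓑` is `{(n,τ) : n ≥ 1}`, so `𝓑` is a
proper substructure of `𝒜`; (ii) the map `(n,τ) ↦ (n+1,τ)` is an isomorphism of
`L₀`-structures from `𝒜` onto `𝓑`; (iii) `𝓑` is a Σ₁-elementary substructure of `𝒜`.
In particular, `𝒜` contains a proper Σ₁-elementary substructure isomorphic to itself. -/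
theorem stmt_12 :
    (TreeB : Set TreeDom) = {x : TreeDom | 1 ≤ x.1} ∧
    TreeB ≠ ⊤ ∧
    (∃ e : TreeDom ≃[L0] TreeB, ∀ x : TreeDom, (e x : TreeDom) = (x.1 + 1, x.2)) ∧
    Sigma1Elementary L0 TreeDom TreeB :=
  stmt_12_general one_ne_zero
end

section
/- Let 𝓑' be the substructure of the labeled tree structure 𝒜' generated by {(1,⟨⟩)} (its underlying set is {(n,τ) : n ≥ 1}). Then 𝒜' is not isomorphic to 𝓑' as L₁-structures. -/
open FirstOrder FirstOrder.Language

/-- The relation symbols of the language `L₁`: a single unary relation symbol `P`. -/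
inductive TreeRel : ℕ → Type
  | P : TreeRel 1

/-- The language `L₁`: unary function symbols `p` and `c_i` (`i ∈ ℤ`) together with a unary
relation symbol `P`. -/
def L1 : Language := ⟨TreeFn, TreeRel⟩

/-- The labeled tree `L₁`-structure `𝒜'` on `TreeDom`, where `P^{𝒜'}(n,τ)` holds if and
only if `n + |τ|` is even. -/
instance treeStructure' : L1.Structure TreeDom where
  funMap {_n} f x :=
    match f with
    | TreeFn.p => pInterp (x 0)
    | TreeFn.c i => cInterp i (x 0)
  RelMap {_n} r x :=
    match r with
    | TreeRel.P => Even ((x 0).1 + (x 0).2.length)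

/-- `𝓑'`, the substructure of `𝒜'` generated by `{(1,⟨⟩)}`
(its underlying set is `{(n,τ) : n ≥ 1}`). -/
def TreeB' : L1.Substructure TreeDom :=
  Substructure.closure L1 ({((1 : ℕ), ([] : List ℤ))} : Set TreeDom)

/-! A point of `𝒜'` is of the form `c_i y` exactly when its sequence is nonempty, since then it is a
child of its parent. Injective endomorphisms reflect this property, so they send roots `(n,⟨⟩)` to
roots; commuting with `p` and the `c_i`, they are shifts `(n,τ) ↦ (k+n,τ)`, and preservation of
`P` at `(0,⟨⟩)` makes `k` even. An isomorphism of `𝒜'` with the substructure on `{(n,τ) : n ≥ m}`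
would be such a shift with `k = m`, so `m` has to be even. -/

namespace TreeDom

theorem cInterp_getLast_pInterp {x : TreeDom} (hx : x.2 ≠ []) :
    cInterp (x.2.getLast hx) (pInterp x) = x := by
  rw [pInterp, if_neg hx]
  exact Prod.ext rfl (List.dropLast_append_getLast hx)

section Hom

variable (φ : TreeDom →[L1] TreeDom)

theorem map_pInterp (x : TreeDom) : φ (pInterp x) = pInterp (φ x) :=
  φ.map_fun (TreeFn.p : L1.Functions 1) fun _ => x

theorem map_cInterp (i : ℤ) (x : TreeDom) : φ (cInterp i x) = cInterp i (φ x) :=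
  φ.map_fun (TreeFn.c i : L1.Functions 1) fun _ => x

theorem even_map {x : TreeDom} (hx : Even (x.1 + x.2.length)) :
    Even ((φ x).1 + (φ x).2.length) :=
  φ.map_rel (TreeRel.P : L1.Relations 1) (fun _ => x) hx

variable {φ}

theorem snd_map_root (hφ : Function.Injective φ) (n : ℕ) : (φ (n, [])).2 = [] := by
  by_contra hne
  have hchild := cInterp_getLast_pInterp hne
  rw [← map_pInterp, ← map_cInterp] at hchild
  simpa [cInterp] using congrArg Prod.snd (hφ hchild)

theorem map_root (hφ : Function.Injective φ) (n : ℕ) : φ (n, []) = ((φ (0, [])).1 + n, []) := by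
  induction n with
  | zero => exact Prod.ext rfl (snd_map_root hφ 0)
  | succ n ih => simpa [pInterp, ih, add_assoc] using map_pInterp φ (n, [])

theorem map_eq_shift (hφ : Function.Injective φ) (n : ℕ) (τ : List ℤ) :
    φ (n, τ) = ((φ (0, [])).1 + n, τ) := by
  induction τ using List.reverseRecOn with
  | nil => exact map_root hφ n
  | append_singleton τ i ih => simpa [cInterp, ih] using map_cInterp φ i (n, τ)

theorem even_fst_map_zero (hφ : Function.Injective φ) : Even (φ (0, [])).1 := by
  simpa [snd_map_root hφ] using even_map φ (x := (0, [])) (by simp)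

end Hom

/-- The substructure of `𝒜'` with underlying set `{(n,τ) : n ≥ m}`, an explicit description of the
one generated by `(m,⟨⟩)`; the case `m = 1` is `𝓑'`. -/
def fromLevel (m : ℕ) : L1.Substructure TreeDom where
  carrier := {x | m ≤ x.1}
  fun_mem
    | TreeFn.p => fun x hx => by
      have hle : m ≤ (x 0).1 := hx 0
      change m ≤ (pInterp (x 0)).1
      unfold pInterp
      split_ifs
      · exact Nat.le_succ_of_le hle
      · exact hle
    | TreeFn.c _ => fun _ hx => hx 0

theorem pInterp_mem {S : L1.Substructure TreeDom} {x : TreeDom} (hx : x ∈ S) : pInterp x ∈ S :=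
  S.fun_mem (TreeFn.p : L1.Functions 1) (fun _ => x) fun _ => hx

theorem cInterp_mem {S : L1.Substructure TreeDom} (i : ℤ) {x : TreeDom} (hx : x ∈ S) :
    cInterp i x ∈ S :=
  S.fun_mem (TreeFn.c i : L1.Functions 1) (fun _ => x) fun _ => hx

theorem mem_of_root_mem {S : L1.Substructure TreeDom} {m n : ℕ} (hm : (m, []) ∈ S) (hmn : m ≤ n)
    (τ : List ℤ) : (n, τ) ∈ S := by
  induction τ using List.reverseRecOn with
  | nil =>
    induction n, hmn using Nat.le_induction with
    | base => exact hm
    | succ n _ ih => exact pInterp_mem ih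
  | append_singleton τ i ih => exact cInterp_mem i ih

theorem closure_root_eq_fromLevel (m : ℕ) :
    Substructure.closure L1 ({(m, [])} : Set TreeDom) = fromLevel m := by
  apply le_antisymm
  · exact Substructure.closure_le.2 (Set.singleton_subset_iff.2 (le_refl m))
  · exact fun x hx => mem_of_root_mem (Substructure.subset_closure (Set.mem_singleton _)) hx x.2

theorem even_of_equiv_fromLevel {m : ℕ} (f : TreeDom ≃[L1] fromLevel m) : Even m := by
  let φ : TreeDom →[L1] TreeDom := (fromLevel m).subtype.toHom.comp f.toHom
  have hφ : Function.Injective φ := Subtype.val_injective.comp f.injective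
  have hle : m ≤ (φ (0, [])).1 := (f (0, [])).2
  have hge : (φ (0, [])).1 ≤ m := by
    obtain ⟨⟨n, τ⟩, hx⟩ := f.surjective ⟨(m, []), le_refl m⟩
    have hshift : φ (n, τ) = (m, []) := congrArg Subtype.val hx
    rw [map_eq_shift hφ] at hshift
    exact (Nat.le_add_right _ n).trans_eq (congrArg Prod.fst hshift)
  exact le_antisymm hge hle ▸ even_fst_map_zero hφ

end TreeDom

theorem stmt_13_general {m : ℕ} (hm : Odd m) :
    IsEmpty (TreeDom ≃[L1] Substructure.closure L1 ({(m, [])} : Set TreeDom)) := by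
  rw [TreeDom.closure_root_eq_fromLevel]
  exact ⟨fun f => Nat.not_even_iff_odd.2 hm (TreeDom.even_of_equiv_fromLevel f)⟩

/-- `𝒜'` is not isomorphic to `𝓑'` as `L₁`-structures. -/
theorem stmt_13 : IsEmpty (TreeDom ≃[L1] TreeB') :=
  stmt_13_general odd_one
end
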